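/- Let θ > 0. There exists a constant C (depending only on θ) such that for all integers n ≥ 1, ∑_{1≤j,k≤n} (1/(jk)) |Ψ_n(j)Ψ_n(k) − Ψ_n(j+k)·1_{j+k≤n}| ≤ C, where 1_{j+k≤n} equals 1 if j+k ≤ n and 0 otherwise. -/

import Mathlib

open Finset

/-- `Ψ_n(j) = ∏_{i=0}^{j−1} (n−i)/(θ+n−1−i)`. -/
noncomputable def Psi (θ : ℝ) (n j : ℕ) : ℝ :=
  ∏ i ∈ Finset.range j, ((n : ℝ) - i) / (θ + (n : ℝ) - 1 - i)

/-!
Two facts about `Ψ` determine the sum.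

* Since `Ψ_n(j + k) = Ψ_n(j) Ψ_{n-j}(k)` and `Ψ_m(k)` is monotone in `m ≥ k` (increasing for
  `1 ≤ θ`, decreasing for `θ ≤ 1`), the difference `Ψ_n(j) Ψ_n(k) - Ψ_n(j + k)` has constant sign
  on the triangle `j + k ≤ n`; on the corner `j + k > n` it is `Ψ_n(j) Ψ_n(k) ≥ 0`.
* `∑_j Ψ_n(j) / j = ∑_{i ≤ n} 1 / (θ + i - 1)`, hence the signed row sum
  `∑_k (Ψ_n(j) Ψ_n(k) - Ψ_n(j + k)) / k` is `Ψ_n(j) ∑_{n - j < i ≤ n} 1 / (θ + i - 1) ≥ 0`.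

For `1 ≤ θ` the signed sum is the sum itself, and it is at most the sum of `1 / (j k)` over the
corner. For `θ ≤ 1` the sum is at most twice the corner part. On the corner
`1 / (j k) ≤ (1 / j + 1 / k) / n`; with `∑_{n - j < k ≤ n} Ψ_n(k) = (j / θ) Ψ_n(n - j)` and
`(n - j) Ψ_n(j) ≤ n`, both obtained by telescoping `(n - j) Ψ_n(j)`, this bounds the corner part.
-/

theorem sum_corner_div_mul_le {K : Type*} [Field K] [LinearOrder K] [IsStrictOrderedRing K]
    {F : ℕ → ℕ → K} (hF : ∀ j k, 0 ≤ F j k) (hF_symm : ∀ j k, F j k = F k j) (n : ℕ) :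
    ∑ j ∈ Ioc 0 n, ∑ k ∈ Ioc (n - j) n, F j k / (j * k) ≤
      2 / n * ∑ j ∈ Ioc 0 n, ∑ k ∈ Ioc (n - j) n, F j k / j := by
  have hswap : ∑ j ∈ Ioc 0 n, ∑ k ∈ Ioc (n - j) n, F j k / k =
      ∑ j ∈ Ioc 0 n, ∑ k ∈ Ioc (n - j) n, F j k / j := by
    rw [sum_comm' (t' := Ioc 0 n) (s' := fun k ↦ Ioc (n - k) n)
      (by intro j k; simp only [mem_Ioc]; omega)]
    simp only [hF_symm]
  have hterm : ∀ j ∈ Ioc 0 n, ∀ k ∈ Ioc (n - j) n,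
      F j k / (j * k) ≤ 1 / n * (F j k / j + F j k / k) := by
    intro j hj k hk
    simp only [mem_Ioc] at hj hk
    have hj₀ : (0 : K) < j := mod_cast hj.1
    have hk₀ : (0 : K) < k := mod_cast (by omega : 0 < k)
    have hn₀ : (0 : K) < n := mod_cast (by omega : 0 < n)
    have hjk : (n : K) ≤ j + k := mod_cast (by omega : n ≤ j + k)
    calc F j k / (j * k) = n * (F j k / (n * (j * k))) := by field_simp
      _ ≤ (j + k) * (F j k / (n * (j * k))) := by have := hF j k; gcongr
      _ = 1 / n * (F j k / j + F j k / k) := by field_simp; ring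
  calc ∑ j ∈ Ioc 0 n, ∑ k ∈ Ioc (n - j) n, F j k / (j * k)
      ≤ ∑ j ∈ Ioc 0 n, ∑ k ∈ Ioc (n - j) n, 1 / n * (F j k / j + F j k / k) :=
        sum_le_sum fun j hj ↦ sum_le_sum (hterm j hj)
    _ = 2 / n * ∑ j ∈ Ioc 0 n, ∑ k ∈ Ioc (n - j) n, F j k / j := by
        simp only [← mul_sum, sum_add_distrib]
        rw [hswap]
        ring

theorem sum_corner_one_div_mul_le_two {K : Type*} [Field K] [LinearOrder K]
    [IsStrictOrderedRing K] (n : ℕ) :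
    ∑ j ∈ Ioc 0 n, ∑ k ∈ Ioc (n - j) n, 1 / ((j : K) * k) ≤ 2 := by
  have hrow : ∀ j ∈ Ioc 0 n, ∑ _k ∈ Ioc (n - j) n, 1 / (j : K) = 1 := by
    intro j hj
    obtain ⟨hj₀, hjn⟩ := mem_Ioc.1 hj
    rw [sum_const, Nat.card_Ioc, Nat.sub_sub_self hjn, nsmul_eq_mul,
      mul_one_div_cancel (mod_cast hj₀.ne')]
  calc ∑ j ∈ Ioc 0 n, ∑ k ∈ Ioc (n - j) n, 1 / ((j : K) * k)
      ≤ 2 / n * ∑ j ∈ Ioc 0 n, ∑ _k ∈ Ioc (n - j) n, 1 / (j : K) :=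
        sum_corner_div_mul_le (fun _ _ ↦ zero_le_one) (fun _ _ ↦ rfl) n
    _ = 2 / n * n := by rw [sum_congr rfl hrow]; simp
    _ ≤ 2 := by
        rw [div_mul_comm]
        exact mul_le_of_le_one_left zero_le_two (div_self_le_one _)

section Psi

variable {θ : ℝ} {m n j k : ℕ}

@[simp]
theorem Psi_zero_right (θ : ℝ) (n : ℕ) : Psi θ n 0 = 1 := prod_range_zero _

theorem Psi_one_right (θ : ℝ) (n : ℕ) : Psi θ n 1 = n / (θ + n - 1) := by simp [Psi]

theorem Psi_succ_right (θ : ℝ) (n j : ℕ) :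
    Psi θ n (j + 1) = Psi θ n j * ((n - j) / (θ + n - 1 - j)) := prod_range_succ _ _

theorem Psi_eq_zero_of_lt (θ : ℝ) (h : n < j) : Psi θ n j = 0 :=
  prod_eq_zero (mem_range.2 h) (by simp)

theorem Psi_add_right (θ : ℝ) (n j k : ℕ) :
    Psi θ n (j + k) = Psi θ n j * Psi θ (n - j) k := by
  rcases lt_or_ge n j with h | h
  · rw [Psi_eq_zero_of_lt θ h, Psi_eq_zero_of_lt θ (Nat.lt_add_right k h), zero_mul]
  · rw [Psi, prod_range_add]
    congr 1
    refine prod_congr rfl fun i _ ↦ ?_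
    push_cast [Nat.cast_sub h]
    congr 1 <;> ring

theorem Psi_succ_succ (hθ : 0 < θ) (n j : ℕ) :
    (θ + n) * Psi θ (n + 1) (j + 1) = (n + 1) * Psi θ n j := by
  have hθn : θ + n ≠ 0 := by positivity
  rw [add_comm j 1, Psi_add_right, Psi_one_right, add_tsub_cancel_right]
  push_cast
  rw [← add_assoc, add_sub_cancel_right]
  field_simp

theorem Psi_denom_pos (hθ : 0 < θ) (h : j < n) : 0 < θ + n - 1 - j := by
  have : (j : ℝ) + 1 ≤ n := mod_cast h
  linarith

theorem Psi_factor_nonneg (hθ : 0 < θ) (h : j < n) : 0 ≤ ((n : ℝ) - j) / (θ + n - 1 - j) :=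
  div_nonneg (sub_nonneg.2 (mod_cast h.le)) (Psi_denom_pos hθ h).le

theorem sub_mul_Psi (hθ : 0 < θ) (n j : ℕ) :
    (n - j) * Psi θ n j = (θ + n - 1 - j) * Psi θ n (j + 1) := by
  rcases lt_trichotomy j n with h | rfl | h
  · have := (Psi_denom_pos hθ h).ne'
    rw [Psi_succ_right]
    field_simp
  · simp [Psi_eq_zero_of_lt θ j.lt_succ_self]
  · simp [Psi_eq_zero_of_lt θ h, Psi_eq_zero_of_lt θ (h.trans j.lt_succ_self)]

theorem Psi_nonneg (hθ : 0 < θ) (n j : ℕ) : 0 ≤ Psi θ n j := by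
  rcases lt_or_ge n j with h | h
  · exact (Psi_eq_zero_of_lt θ h).ge
  · exact prod_nonneg fun i hi ↦ Psi_factor_nonneg hθ ((mem_range.1 hi).trans_le h)

theorem Psi_le_one (hθ : 1 ≤ θ) (n j : ℕ) : Psi θ n j ≤ 1 := by
  have hθ₀ : 0 < θ := zero_lt_one.trans_le hθ
  rcases lt_or_ge n j with h | h
  · exact (Psi_eq_zero_of_lt θ h).trans_le zero_le_one
  · have hlt : ∀ i ∈ range j, i < n := fun i hi ↦ (mem_range.1 hi).trans_le h
    exact prod_le_one (fun i hi ↦ Psi_factor_nonneg hθ₀ (hlt i hi))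
      fun i hi ↦ (div_le_one (Psi_denom_pos hθ₀ (hlt i hi))).2 (by linarith)

theorem Psi_mono_left (hθ : 1 ≤ θ) (hmn : m ≤ n) (k : ℕ) : Psi θ m k ≤ Psi θ n k := by
  have hθ₀ : 0 < θ := zero_lt_one.trans_le hθ
  have hmn' : (m : ℝ) ≤ n := mod_cast hmn
  rcases lt_or_ge m k with h | h
  · exact (Psi_eq_zero_of_lt θ h).trans_le (Psi_nonneg hθ₀ n k)
  · have hlt : ∀ i ∈ range k, i < m := fun i hi ↦ (mem_range.1 hi).trans_le h
    refine prod_le_prod (fun i hi ↦ Psi_factor_nonneg hθ₀ (hlt i hi)) fun i hi ↦ ?_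
    rw [div_le_div_iff₀ (Psi_denom_pos hθ₀ (hlt i hi))
      (Psi_denom_pos hθ₀ ((hlt i hi).trans_le hmn))]
    linarith [mul_nonneg (sub_nonneg.2 hmn') (sub_nonneg.2 hθ)]

theorem Psi_anti_left (hθ₀ : 0 < θ) (hθ : θ ≤ 1) (hkm : k ≤ m) (hmn : m ≤ n) :
    Psi θ n k ≤ Psi θ m k := by
  have hmn' : (m : ℝ) ≤ n := mod_cast hmn
  have hlt : ∀ i ∈ range k, i < m := fun i hi ↦ (mem_range.1 hi).trans_le hkm
  refine prod_le_prod (fun i hi ↦ Psi_factor_nonneg hθ₀ ((hlt i hi).trans_le hmn)) fun i hi ↦ ?_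
  rw [div_le_div_iff₀ (Psi_denom_pos hθ₀ ((hlt i hi).trans_le hmn))
    (Psi_denom_pos hθ₀ (hlt i hi))]
  linarith [mul_nonneg (sub_nonneg.2 hmn') (sub_nonneg.2 hθ)]

theorem mul_sum_Ioc_Psi (hθ : 0 < θ) (n : ℕ) (hjk : j ≤ k) :
    θ * ∑ i ∈ Ioc j k, Psi θ n i = (n - j) * Psi θ n j - (n - k) * Psi θ n k := by
  induction k, hjk using Nat.le_induction with
  | base => simp
  | succ k hjk ih =>
    rw [sum_Ioc_succ_top (by omega), mul_add, ih]
    push_cast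
    linear_combination -sub_mul_Psi hθ n k

theorem sub_mul_Psi_le (hθ : 0 < θ) (n j : ℕ) : (n - j) * Psi θ n j ≤ n := by
  have hsum : 0 ≤ θ * ∑ i ∈ Ioc 0 j, Psi θ n i :=
    mul_nonneg hθ.le (sum_nonneg fun i _ ↦ Psi_nonneg hθ n i)
  rw [mul_sum_Ioc_Psi hθ n j.zero_le] at hsum
  simpa using hsum

theorem sum_Ioc_Psi_self (hθ : 0 < θ) (h : j ≤ n) :
    ∑ k ∈ Ioc (n - j) n, Psi θ n k = j / θ * Psi θ n (n - j) := by
  have hsum := mul_sum_Ioc_Psi hθ n (n.sub_le j)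
  rw [Nat.cast_sub h, sub_self, zero_mul, sub_zero, sub_sub_cancel] at hsum
  rw [div_mul_eq_mul_div, eq_div_iff hθ.ne', mul_comm, hsum]

theorem sum_range_Psi (hθ : 0 < θ) (n : ℕ) :
    ∑ j ∈ range (n + 1), Psi θ n j = n / θ + 1 := by
  have hsum := sum_Ioc_Psi_self hθ (le_refl n)
  rw [Nat.sub_self, Psi_zero_right, mul_one] at hsum
  rw [Nat.range_succ_eq_Icc_zero, ← sum_Ioc_add_eq_sum_Icc n.zero_le, hsum, Psi_zero_right]

theorem Psi_mul_Psi_sub_le (hθ : 0 < θ) (hn : 0 < n) (h : j ≤ n) :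
    Psi θ n j * Psi θ n (n - j) ≤ Psi θ n j + Psi θ n (n - j) := by
  have hn' : (0 : ℝ) < n := mod_cast hn
  have hleft := sub_mul_Psi_le hθ n j
  have hright := sub_mul_Psi_le hθ n (n - j)
  rw [Nat.cast_sub h, sub_sub_cancel] at hright
  refine le_of_mul_le_mul_left ?_ hn'
  linarith [mul_le_mul_of_nonneg_right hleft (Psi_nonneg hθ n (n - j)),
    mul_le_mul_of_nonneg_right hright (Psi_nonneg hθ n j)]

theorem sum_Psi_mul_Psi_sub_le (hθ : 0 < θ) (hn : 0 < n) :
    ∑ j ∈ Ioc 0 n, Psi θ n j * Psi θ n (n - j) ≤ 2 * (n / θ + 1) := by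
  calc ∑ j ∈ Ioc 0 n, Psi θ n j * Psi θ n (n - j)
      ≤ ∑ j ∈ range (n + 1), Psi θ n j * Psi θ n (n - j) :=
        sum_le_sum_of_subset_of_nonneg (fun j hj ↦ by simp only [mem_Ioc, mem_range] at hj ⊢; omega)
          fun j _ _ ↦ mul_nonneg (Psi_nonneg hθ n j) (Psi_nonneg hθ n (n - j))
    _ ≤ ∑ j ∈ range (n + 1), (Psi θ n j + Psi θ n (n - j)) :=
        sum_le_sum fun j hj ↦ Psi_mul_Psi_sub_le hθ hn (mem_range_succ_iff.1 hj)
    _ = 2 * (n / θ + 1) := by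
        rw [sum_add_distrib, sum_flip (Psi θ n), sum_range_Psi hθ]
        ring

theorem sum_corner_Psi_le (hθ : 0 < θ) (hn : 0 < n) :
    ∑ j ∈ Ioc 0 n, ∑ k ∈ Ioc (n - j) n, Psi θ n j * Psi θ n k / (j * k) ≤
      4 / θ * (1 / θ + 1) := by
  have hn' : (1 : ℝ) ≤ n := mod_cast hn
  have hrow : ∀ j ∈ Ioc 0 n, ∑ k ∈ Ioc (n - j) n, Psi θ n j * Psi θ n k / j =
      1 / θ * (Psi θ n j * Psi θ n (n - j)) := by
    intro j hj
    obtain ⟨hj₀, hjn⟩ := mem_Ioc.1 hj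
    have hj₀' : (j : ℝ) ≠ 0 := mod_cast hj₀.ne'
    rw [← sum_div, ← mul_sum, sum_Ioc_Psi_self hθ hjn]
    field_simp
  calc ∑ j ∈ Ioc 0 n, ∑ k ∈ Ioc (n - j) n, Psi θ n j * Psi θ n k / (j * k)
      ≤ 2 / n * ∑ j ∈ Ioc 0 n, ∑ k ∈ Ioc (n - j) n, Psi θ n j * Psi θ n k / j :=
        sum_corner_div_mul_le (fun j k ↦ mul_nonneg (Psi_nonneg hθ n j) (Psi_nonneg hθ n k))
          (fun _ _ ↦ mul_comm _ _) n
    _ = 2 / n * (1 / θ * ∑ j ∈ Ioc 0 n, Psi θ n j * Psi θ n (n - j)) := by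
        rw [sum_congr rfl hrow, ← mul_sum]
    _ ≤ 2 / n * (1 / θ * (2 * (n / θ + 1))) := by gcongr; exact sum_Psi_mul_Psi_sub_le hθ hn
    _ = 4 / θ * (1 / θ + 1 / n) := by field_simp; ring
    _ ≤ 4 / θ * (1 / θ + 1) := by gcongr; exact (div_le_one (by positivity)).2 hn'

-- Split off the first or the last factor of `Ψ_{n+1}(j + 1)` and eliminate `θ`.
theorem succ_mul_Psi_succ_sub_Psi (hθ : 0 < θ) (n j : ℕ) :
    (n + 1) * (Psi θ (n + 1) j - Psi θ n j) =
      j * (Psi θ (n + 1) j - Psi θ (n + 1) (j + 1)) := by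
  have hfirst := Psi_succ_succ hθ n j
  have hlast := sub_mul_Psi hθ (n + 1) j
  push_cast at hlast
  linear_combination hlast + hfirst

theorem sum_Psi_div (hθ : 0 < θ) (n : ℕ) :
    ∑ j ∈ Ioc 0 n, Psi θ n j / j = ∑ i ∈ Ioc 0 n, 1 / (θ + i - 1) := by
  induction n with
  | zero => simp
  | succ n ih =>
    have hincr : ∀ j ∈ Ioc 0 (n + 1), Psi θ (n + 1) j / j =
        Psi θ n j / j - (Psi θ (n + 1) (j + 1) - Psi θ (n + 1) j) / (n + 1) := by
      intro j hj
      have hj₀ : (j : ℝ) ≠ 0 := mod_cast (mem_Ioc.1 hj).1.ne'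
      field_simp
      linear_combination succ_mul_Psi_succ_sub_Psi hθ n j
    have htelescope : ∑ j ∈ Ioc 0 (n + 1), (Psi θ (n + 1) (j + 1) - Psi θ (n + 1) j) =
        -Psi θ (n + 1) 1 := by
      rw [← Icc_add_one_left_eq_Ioc, sum_Icc_sub (by omega), Psi_eq_zero_of_lt θ (by omega),
        zero_sub, zero_add]
    have hone : Psi θ (n + 1) 1 / (n + 1) = 1 / (θ + n) := by
      rw [Psi_one_right]
      push_cast
      rw [← add_assoc, add_sub_cancel_right]
      field_simp
    rw [sum_congr rfl hincr, sum_sub_distrib, ← sum_div, htelescope, neg_div, sub_neg_eq_add, hone,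
      sum_Ioc_succ_top n.zero_le, sum_Ioc_succ_top n.zero_le, ih,
      Psi_eq_zero_of_lt θ n.lt_succ_self]
    push_cast
    ring

theorem sum_Psi_add_div (hθ : 0 < θ) (n j : ℕ) :
    ∑ k ∈ Ioc 0 n, Psi θ n (j + k) / k =
      Psi θ n j * ∑ i ∈ Ioc 0 (n - j), 1 / (θ + i - 1) := by
  have hvanish : ∑ k ∈ Ioc (n - j) n, Psi θ n (j + k) / (k : ℝ) = 0 :=
    sum_eq_zero fun k hk ↦ by
      have := (mem_Ioc.1 hk).1
      rw [Psi_eq_zero_of_lt θ (by omega), zero_div]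
  rw [← sum_Ioc_consecutive _ (n - j).zero_le (n.sub_le j), hvanish, add_zero,
    ← sum_Psi_div hθ, mul_sum]
  simp only [Psi_add_right, mul_div_assoc]

/-- The failure `Ψ_n(j) Ψ_n(k) - Ψ_n(j + k)` of `Ψ_n` to be multiplicative. No indicator of
`j + k ≤ n` is needed, because the product defining `Ψ_n(j + k)` has a zero factor when
`n < j + k`. -/
noncomputable def PsiDefect (θ : ℝ) (n j k : ℕ) : ℝ :=
  Psi θ n j * Psi θ n k - Psi θ n (j + k)

theorem PsiDefect_of_lt (θ : ℝ) (h : n < j + k) :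
    PsiDefect θ n j k = Psi θ n j * Psi θ n k := by
  rw [PsiDefect, Psi_eq_zero_of_lt θ h, sub_zero]

theorem PsiDefect_nonneg (hθ : 1 ≤ θ) (n j k : ℕ) : 0 ≤ PsiDefect θ n j k := by
  rw [PsiDefect, Psi_add_right, sub_nonneg]
  exact mul_le_mul_of_nonneg_left (Psi_mono_left hθ (n.sub_le j) k)
    (Psi_nonneg (zero_lt_one.trans_le hθ) n j)

theorem PsiDefect_nonpos (hθ₀ : 0 < θ) (hθ : θ ≤ 1) (h : j + k ≤ n) :
    PsiDefect θ n j k ≤ 0 := by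
  rw [PsiDefect, Psi_add_right, sub_nonpos]
  exact mul_le_mul_of_nonneg_left (Psi_anti_left hθ₀ hθ (by omega) (n.sub_le j))
    (Psi_nonneg hθ₀ n j)

theorem sum_PsiDefect_div (hθ : 0 < θ) (n j : ℕ) :
    ∑ k ∈ Ioc 0 n, PsiDefect θ n j k / k =
      Psi θ n j * ∑ i ∈ Ioc (n - j) n, 1 / (θ + i - 1) := by
  simp only [PsiDefect, sub_div, sum_sub_distrib, mul_div_assoc]
  rw [← mul_sum, sum_Psi_div hθ, sum_Psi_add_div hθ,
    ← sum_Ioc_consecutive _ (n - j).zero_le (n.sub_le j)]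
  ring

theorem sum_abs_PsiDefect_div_le_of_one_le (hθ : 1 ≤ θ) (n j : ℕ) :
    ∑ k ∈ Ioc 0 n, |PsiDefect θ n j k| / k ≤ ∑ k ∈ Ioc (n - j) n, 1 / (k : ℝ) := by
  have hθ₀ : 0 < θ := zero_lt_one.trans_le hθ
  calc ∑ k ∈ Ioc 0 n, |PsiDefect θ n j k| / k
      = Psi θ n j * ∑ i ∈ Ioc (n - j) n, 1 / (θ + i - 1) := by
        simp only [abs_of_nonneg (PsiDefect_nonneg hθ n j _), sum_PsiDefect_div hθ₀]
    _ ≤ 1 * ∑ k ∈ Ioc (n - j) n, 1 / (k : ℝ) := by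
        have hterm : ∀ i ∈ Ioc (n - j) n,
            0 ≤ 1 / (θ + i - 1) ∧ 1 / (θ + i - 1) ≤ 1 / (i : ℝ) := by
          intro i hi
          have hi₀ : (0 : ℝ) < i := mod_cast (Nat.zero_le _).trans_lt (mem_Ioc.1 hi).1
          exact ⟨one_div_nonneg.2 (by linarith), one_div_le_one_div_of_le hi₀ (by linarith)⟩
        exact mul_le_mul (Psi_le_one hθ n j) (sum_le_sum fun i hi ↦ (hterm i hi).2)
          (sum_nonneg fun i hi ↦ (hterm i hi).1) zero_le_one
    _ = ∑ k ∈ Ioc (n - j) n, 1 / (k : ℝ) := one_mul _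

theorem sum_abs_PsiDefect_div_le_of_le_one (hθ₀ : 0 < θ) (hθ : θ ≤ 1) (n j : ℕ) :
    ∑ k ∈ Ioc 0 n, |PsiDefect θ n j k| / k ≤
      2 * ∑ k ∈ Ioc (n - j) n, Psi θ n j * Psi θ n k / k := by
  have hsigned : 0 ≤ ∑ k ∈ Ioc 0 n, PsiDefect θ n j k / k := by
    rw [sum_PsiDefect_div hθ₀]
    refine mul_nonneg (Psi_nonneg hθ₀ n j) (sum_nonneg fun i hi ↦ one_div_nonneg.2 ?_)
    have hi₁ : (1 : ℝ) ≤ i := mod_cast (Nat.zero_le _).trans_lt (mem_Ioc.1 hi).1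
    linarith
  have htriangle : ∑ k ∈ Ioc 0 (n - j), (|PsiDefect θ n j k| + PsiDefect θ n j k) / k = 0 := by
    refine sum_eq_zero fun k hk ↦ ?_
    have hjk : j + k ≤ n := by have := mem_Ioc.1 hk; omega
    rw [abs_of_nonpos (PsiDefect_nonpos hθ₀ hθ hjk), neg_add_cancel, zero_div]
  have hcorner : ∀ k ∈ Ioc (n - j) n,
      (|PsiDefect θ n j k| + PsiDefect θ n j k) / k = 2 * (Psi θ n j * Psi θ n k / k) := by
    intro k hk
    have hjk : n < j + k := by have := (mem_Ioc.1 hk).1; omega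
    rw [PsiDefect_of_lt θ hjk,
      abs_of_nonneg (mul_nonneg (Psi_nonneg hθ₀ n j) (Psi_nonneg hθ₀ n k))]
    ring
  calc ∑ k ∈ Ioc 0 n, |PsiDefect θ n j k| / k
      ≤ ∑ k ∈ Ioc 0 n, |PsiDefect θ n j k| / k + ∑ k ∈ Ioc 0 n, PsiDefect θ n j k / k :=
        le_add_of_nonneg_right hsigned
    _ = ∑ k ∈ Ioc 0 n, (|PsiDefect θ n j k| + PsiDefect θ n j k) / k := by
        simp only [add_div, sum_add_distrib]
    _ = 2 * ∑ k ∈ Ioc (n - j) n, Psi θ n j * Psi θ n k / k := by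
        rw [← sum_Ioc_consecutive _ (n - j).zero_le (n.sub_le j), htriangle, zero_add,
          sum_congr rfl hcorner, mul_sum]

theorem sum_abs_PsiDefect_le_of_one_le (hθ : 1 ≤ θ) (n : ℕ) :
    ∑ j ∈ Ioc 0 n, ∑ k ∈ Ioc 0 n, |PsiDefect θ n j k| / (j * k) ≤ 2 := by
  calc ∑ j ∈ Ioc 0 n, ∑ k ∈ Ioc 0 n, |PsiDefect θ n j k| / (j * k)
      ≤ ∑ j ∈ Ioc 0 n, ∑ k ∈ Ioc (n - j) n, 1 / ((j : ℝ) * k) := by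
        simp only [div_mul_eq_div_div_swap, ← sum_div]
        gcongr with j
        exact sum_abs_PsiDefect_div_le_of_one_le hθ n j
    _ ≤ 2 := sum_corner_one_div_mul_le_two n

theorem sum_abs_PsiDefect_le_of_le_one (hθ₀ : 0 < θ) (hθ : θ ≤ 1) (hn : 0 < n) :
    ∑ j ∈ Ioc 0 n, ∑ k ∈ Ioc 0 n, |PsiDefect θ n j k| / (j * k) ≤
      2 * (4 / θ * (1 / θ + 1)) := by
  calc ∑ j ∈ Ioc 0 n, ∑ k ∈ Ioc 0 n, |PsiDefect θ n j k| / (j * k)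
      ≤ ∑ j ∈ Ioc 0 n, 2 * ∑ k ∈ Ioc (n - j) n, Psi θ n j * Psi θ n k / (j * k) := by
        simp only [div_mul_eq_div_div_swap, ← sum_div, ← mul_div_assoc]
        gcongr with j
        exact sum_abs_PsiDefect_div_le_of_le_one hθ₀ hθ n j
    _ ≤ 2 * (4 / θ * (1 / θ + 1)) := by
        rw [← mul_sum]
        gcongr
        exact sum_corner_Psi_le hθ₀ hn

end Psi

/-- There is a constant `C` (depending only on `θ`) such that for all `n ≥ 1`,
`∑_{1≤j,k≤n} (1/(jk)) |Ψ_n(j)Ψ_n(k) − Ψ_n(j+k)·1_{j+k≤n}| ≤ C`. -/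
theorem stmt_6 (θ : ℝ) (hθ : 0 < θ) :
    ∃ C : ℝ, ∀ n : ℕ, 1 ≤ n →
      ∑ j ∈ Finset.Icc 1 n, ∑ k ∈ Finset.Icc 1 n,
          (1 / ((j : ℝ) * (k : ℝ))) *
            |Psi θ n j * Psi θ n k - (if j + k ≤ n then Psi θ n (j + k) else 0)|
        ≤ C := by
  have hdefect : ∀ n j k : ℕ, 1 / ((j : ℝ) * k) *
      |Psi θ n j * Psi θ n k - (if j + k ≤ n then Psi θ n (j + k) else 0)| =
      |PsiDefect θ n j k| / (j * k) := by
    intro n j k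
    rw [one_div_mul_eq_div, PsiDefect,
      ite_eq_left_iff.2 fun h ↦ (Psi_eq_zero_of_lt θ (not_le.1 h)).symm]
  have hIcc : ∀ n : ℕ, Icc 1 n = Ioc 0 n := Icc_add_one_left_eq_Ioc 0
  simp only [hdefect, hIcc]
  rcases le_total 1 θ with h | h
  · exact ⟨2, fun n _ ↦ sum_abs_PsiDefect_le_of_one_le h n⟩
  · exact ⟨2 * (4 / θ * (1 / θ + 1)), fun n hn ↦ sum_abs_PsiDefect_le_of_le_one hθ h hn⟩
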